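/- arXiv:1706.01282 — 2 statements merged into one kernel-verified Lean document; each statement's English description precedes it below -/
import Mathlib

section
/- Fix an integer P ≥ 2 and integers p, q ≥ 0. There is a constant C = C(p,q,P) such that for every δ > 0 and every z ≥ 0, W_{p,δ}(z) · W_{q,δ}(z) ≤ C · W_{p+q,δ}(z). -/
open scoped ENNReal

/-- The boundary-layer weight `W_{p,δ}(z) = 1 + Σ_{q=1}^{p} δ^{−q} (1 + (z/δ)^{P−1+q})^{−1}`. -/
noncomputable def wt (P p : ℕ) (δ z : ℝ) : ℝ :=
  1 + ∑ q ∈ Finset.Icc 1 p, (δ ^ q)⁻¹ * (1 + (z / δ) ^ (P - 1 + q))⁻¹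

lemma wt_term_nonneg (P k : ℕ) (δ z : ℝ) (hδ : 0 < δ) (hz : 0 ≤ z) :
    0 ≤ (δ ^ k)⁻¹ * (1 + (z / δ) ^ (P - 1 + k))⁻¹ := by
  positivity

lemma wt_mono (P a b : ℕ) (hab : a ≤ b) (δ z : ℝ) (hδ : 0 < δ) (hz : 0 ≤ z) :
    wt P a δ z ≤ wt P b δ z := by
  unfold wt
  have := Finset.sum_le_sum_of_subset_of_nonneg (Finset.Icc_subset_Icc_right (a := 1) hab)
    (f := fun k => (δ ^ k)⁻¹ * (1 + (z / δ) ^ (P - 1 + k))⁻¹)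
    (fun k _ _ => wt_term_nonneg P k δ z hδ hz)
  linarith

lemma wt_pow_bound (m i j : ℕ) (t : ℝ) (ht : 0 ≤ t) :
    1 + t ^ (m + (i + j)) ≤ 2 * ((1 + t ^ (m + i)) * (1 + t ^ (m + j))) := by
  have h1 : 0 ≤ t ^ (m + i) := by positivity
  have h2 : 0 ≤ t ^ (m + j) := by positivity
  have h3 : t ^ (m + i) * t ^ (m + j) = t ^ (m + (i + j) + m) := by
    rw [← pow_add]; congr 1; omega
  have h4 : 0 ≤ t ^ (m + (i + j) + m) := by positivity
  have h5 : t ^ (m + (i + j)) ≤ 1 + t ^ (m + (i + j) + m) := by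
    rcases le_total t 1 with h | h
    · have := pow_le_one₀ (n := m + (i + j)) ht h
      linarith
    · have := pow_le_pow_right₀ h (Nat.le_add_right (m + (i + j)) m)
      linarith
  nlinarith

lemma wt_term_mul (P i j : ℕ) (δ z : ℝ) (hδ : 0 < δ) (hz : 0 ≤ z) :
    ((δ ^ i)⁻¹ * (1 + (z / δ) ^ (P - 1 + i))⁻¹) * ((δ ^ j)⁻¹ * (1 + (z / δ) ^ (P - 1 + j))⁻¹)
      ≤ 2 * ((δ ^ (i + j))⁻¹ * (1 + (z / δ) ^ (P - 1 + (i + j)))⁻¹) := by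
  have ht : 0 ≤ z / δ := by positivity
  have hb := wt_pow_bound (P - 1) i j (z / δ) ht
  have hA : 0 < 1 + (z / δ) ^ (P - 1 + i) := by positivity
  have hB : 0 < 1 + (z / δ) ^ (P - 1 + j) := by positivity
  have hC : 0 < 1 + (z / δ) ^ (P - 1 + (i + j)) := by positivity
  generalize 1 + (z / δ) ^ (P - 1 + i) = A at *
  generalize 1 + (z / δ) ^ (P - 1 + j) = B at *
  generalize 1 + (z / δ) ^ (P - 1 + (i + j)) = D at *
  have key : A⁻¹ * B⁻¹ ≤ 2 * D⁻¹ := by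
    rw [← mul_inv, ← div_eq_mul_inv, inv_eq_one_div, div_le_div_iff₀ (by positivity) hC]
    linarith
  have hd : 0 ≤ (δ ^ (i + j))⁻¹ := by positivity
  calc _ = (δ ^ (i + j))⁻¹ * (A⁻¹ * B⁻¹) := by rw [pow_add, mul_inv]; ring
    _ ≤ (δ ^ (i + j))⁻¹ * (2 * D⁻¹) := mul_le_mul_of_nonneg_left key hd
    _ = _ := by ring

lemma wt_term_le (P n k : ℕ) (hk : k ∈ Finset.Icc 1 n) (δ z : ℝ) (hδ : 0 < δ) (hz : 0 ≤ z) :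
    (δ ^ k)⁻¹ * (1 + (z / δ) ^ (P - 1 + k))⁻¹ ≤ wt P n δ z := by
  unfold wt
  have := Finset.single_le_sum (f := fun k => (δ ^ k)⁻¹ * (1 + (z / δ) ^ (P - 1 + k))⁻¹)
    (fun k _ => wt_term_nonneg P k δ z hδ hz) hk
  linarith

/-- the weights are submultiplicative up to a constant `C = C(p,q,P)`. -/
theorem weight_submultiplicative (P : ℕ) (hP : 2 ≤ P) (p q : ℕ) :
    ∃ C : ℝ, 0 < C ∧ ∀ δ : ℝ, 0 < δ → ∀ z : ℝ, 0 ≤ z →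
      wt P p δ z * wt P q δ z ≤ C * wt P (p + q) δ z := by
  refine ⟨2 + 2 * p * q, by positivity, fun δ hδ z hz => ?_⟩
  have hp := wt_mono P p (p + q) (by omega) δ z hδ hz
  have hq := wt_mono P q (p + q) (by omega) δ z hδ hz
  have hm : (∑ i ∈ Finset.Icc 1 p, (δ ^ i)⁻¹ * (1 + (z / δ) ^ (P - 1 + i))⁻¹) *
      (∑ j ∈ Finset.Icc 1 q, (δ ^ j)⁻¹ * (1 + (z / δ) ^ (P - 1 + j))⁻¹)
      ≤ 2 * p * q * wt P (p + q) δ z := by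
    rw [Finset.sum_mul_sum]
    calc _ ≤ ∑ i ∈ Finset.Icc 1 p, ∑ j ∈ Finset.Icc 1 q, 2 * wt P (p + q) δ z := by
          refine Finset.sum_le_sum fun i hi => Finset.sum_le_sum fun j hj => ?_
          have h1 := wt_term_mul P i j δ z hδ hz
          have h2 := wt_term_le P (p + q) (i + j)
            (by simp only [Finset.mem_Icc] at *; omega) δ z hδ hz
          linarith
      _ = _ := by simp; ring
  generalize wt P (p + q) δ z = W at *
  unfold wt at *
  nlinarith
end

section
/- Fix an integer P ≥ 2 and let β ∈ (0, 1/2). There exists a constant C = C(β,P) such that for every real α with |α| ≥ 1, every δ ∈ (0,1], every continuous f : [0,∞) → ℂ with ‖f‖_{β,δ,1} < ∞, and φ(z) = −(1/(2|α|)) ∫₀^∞ ( e^{−|α||x−z|} − e^{−|α|(x+z)} ) f(x) dx the decaying solution of φ'' − α²φ = f with φ(0) = 0, the following product estimates hold for all functions g, h : [0,∞) → ℂ: ‖φ' · g‖_{β,δ,1} ≤ C ‖f‖_{β,δ,1} ‖g‖_{β,δ,1} and ‖φ · h‖_{β,δ,1} ≤ C ‖f‖_{β,δ,1} ‖h‖_{β,δ,1}.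 -/
open scoped ENNReal

/-- The boundary-layer norm `‖ω‖_{β,δ,p} = sup_{z≥0} W_{p,δ}(z)^{−1} e^{βz}|ω(z)|`. -/
noncomputable def blNorm (P : ℕ) (β δ : ℝ) (p : ℕ) (ω : ℝ → ℂ) : ℝ≥0∞ :=
  ⨆ z : Set.Ici (0:ℝ), ENNReal.ofReal ((wt P p δ z.1)⁻¹ * Real.exp (β * z.1) * ‖ω z.1‖)

/-- The Green's function solution
`φ(z) = −(1/(2α)) ∫₀^∞ ( e^{−α|x−z|} − e^{−α(x+z)} ) f(x) dx` of `φ'' − α²φ = f`, `φ(0)=0`. -/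
noncomputable def greenSol (α : ℝ) (f : ℝ → ℂ) (z : ℝ) : ℂ :=
  -(1 / (2 * (α:ℂ))) * ∫ x in Set.Ici (0:ℝ),
    ((Real.exp (-(α * |x - z|)) - Real.exp (-(α * (x + z))) : ℝ) : ℂ) * f x

open MeasureTheory Set

lemma aux_exp_lip (a b : ℝ) (ha : 0 ≤ a) (hb : 0 ≤ b) :
    |Real.exp (-a) - Real.exp (-b)| ≤ |a - b| := by
  have key : ∀ a b : ℝ, 0 ≤ a → a ≤ b → |Real.exp (-a) - Real.exp (-b)| ≤ |a - b| := by
    intro a b ha hab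
    have h1 : Real.exp (-b) ≤ Real.exp (-a) := Real.exp_le_exp.2 (by linarith)
    rw [abs_of_nonneg (by linarith), abs_of_nonpos (by linarith)]
    have h2 : Real.exp (-b) = Real.exp (-a) * Real.exp (-(b - a)) := by
      rw [← Real.exp_add]; congr 1; ring
    have h3 : Real.exp (-a) ≤ 1 := Real.exp_le_one_iff.2 (by linarith)
    have h4 := Real.add_one_le_exp (-(b - a))
    have h5 := Real.exp_pos (-a)
    rw [h2]
    nlinarith
  rcases le_total a b with h | h
  · exact key a b ha h
  · rw [abs_sub_comm, abs_sub_comm a b]; exact key b a hb h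

lemma aux_wt_pos (P : ℕ) (δ z : ℝ) (hδ : 0 < δ) (hz : 0 ≤ z) : 0 < wt P 1 δ z := by
  unfold wt
  positivity

lemma aux_wt_le (P : ℕ) (hP : 2 ≤ P) (δ z : ℝ) (hδ : 0 < δ) (hz : 0 ≤ z) :
    wt P 1 δ z ≤ 1 + 2 * (δ⁻¹ * (1 + (z / δ) ^ 2)⁻¹) := by
  have hu : 0 ≤ z / δ := by positivity
  have hP' : P - 1 + 1 = P := by omega
  have key : (1 + (z / δ) ^ P)⁻¹ ≤ 2 * (1 + (z / δ) ^ 2)⁻¹ := by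
    rw [← div_eq_mul_inv, inv_eq_one_div, div_le_div_iff₀ (by positivity) (by positivity)]
    have h0 : 0 ≤ (z / δ) ^ P := by positivity
    rcases le_total (z / δ) 1 with h | h
    · have : (z / δ) ^ 2 ≤ 1 := pow_le_one₀ hu h
      linarith
    · have : (z / δ) ^ 2 ≤ (z / δ) ^ P := pow_le_pow_right₀ h hP
      linarith
  have hd : 0 < δ⁻¹ := by positivity
  simp only [wt, Finset.Icc_self, Finset.sum_singleton, pow_one, hP']
  nlinarith

lemma aux_norm_le (P : ℕ) (hP : 2 ≤ P) (β δ : ℝ) (hβ : 0 < β) (hδ : 0 < δ) (f : ℝ → ℂ)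
    (hf : blNorm P β δ 1 f < ⊤) (z : ℝ) (hz : 0 ≤ z) :
    ‖f z‖ ≤ (blNorm P β δ 1 f).toReal *
      (Real.exp (-β * z) + 2 * (δ⁻¹ * (1 + (z / δ) ^ 2)⁻¹)) := by
  set F := (blNorm P β δ 1 f).toReal with hF
  have hF0 : 0 ≤ F := ENNReal.toReal_nonneg
  have h1 : (wt P 1 δ z)⁻¹ * Real.exp (β * z) * ‖f z‖ ≤ F := by
    rw [hF, ← ENNReal.ofReal_le_iff_le_toReal hf.ne]
    exact le_iSup (fun z : Set.Ici (0:ℝ) =>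
      ENNReal.ofReal ((wt P 1 δ z.1)⁻¹ * Real.exp (β * z.1) * ‖f z.1‖)) ⟨z, hz⟩
  have hw := aux_wt_pos P δ z hδ hz
  have hwl := aux_wt_le P hP δ z hδ hz
  have he : Real.exp (β * z) * Real.exp (-β * z) = 1 := by
    rw [← Real.exp_add]; simp
  have hep := Real.exp_pos (-β * z)
  have he1 : Real.exp (-β * z) ≤ 1 := Real.exp_le_one_iff.2 (by nlinarith)
  have hk : 0 ≤ 2 * (δ⁻¹ * (1 + (z / δ) ^ 2)⁻¹) := by positivity
  calc ‖f z‖ = ((wt P 1 δ z)⁻¹ * Real.exp (β * z) * ‖f z‖) * (wt P 1 δ z * Real.exp (-β * z)) := by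
        have : (wt P 1 δ z)⁻¹ * wt P 1 δ z = 1 := inv_mul_cancel₀ hw.ne'
        calc ‖f z‖ = ((wt P 1 δ z)⁻¹ * wt P 1 δ z) * (Real.exp (β * z) * Real.exp (-β * z)) * ‖f z‖ := by
              rw [this, he]; ring
          _ = _ := by ring
    _ ≤ F * (wt P 1 δ z * Real.exp (-β * z)) := by gcongr
    _ ≤ _ := by
        gcongr
        nlinarith

lemma aux_majorant (β δ : ℝ) (hβ : 0 < β) (hδ : 0 < δ) :
    IntegrableOn (fun z : ℝ => Real.exp (-β * z) + 2 * (δ⁻¹ * (1 + (z / δ) ^ 2)⁻¹)) (Ici 0) ∧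
    ∫ z in Ici (0:ℝ), (Real.exp (-β * z) + 2 * (δ⁻¹ * (1 + (z / δ) ^ 2)⁻¹)) ≤
      1 / β + 2 * Real.pi := by
  have i1 : IntegrableOn (fun z : ℝ => Real.exp (-β * z)) (Ici 0) := by
    rw [integrableOn_Ici_iff_integrableOn_Ioi]
    exact integrableOn_exp_mul_Ioi (by linarith) 0
  have i2 : Integrable (fun z : ℝ => 2 * (δ⁻¹ * (1 + (z / δ) ^ 2)⁻¹)) :=
    ((integrable_inv_one_add_sq.comp_div hδ.ne').const_mul _).const_mul _
  refine ⟨i1.add i2.integrableOn, ?_⟩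
  rw [integral_add i1 i2.integrableOn]
  have e1 : ∫ z in Ici (0:ℝ), Real.exp (-β * z) = 1 / β := by
    rw [integral_Ici_eq_integral_Ioi, integral_exp_mul_Ioi (by linarith) 0]
    simp
  have e2 : ∫ z in Ici (0:ℝ), 2 * (δ⁻¹ * (1 + (z / δ) ^ 2)⁻¹) ≤ 2 * Real.pi := by
    refine (setIntegral_le_integral i2 (Filter.Eventually.of_forall fun z => by
      simp only [Pi.zero_apply]; positivity)).trans (le_of_eq ?_)
    rw [integral_const_mul, integral_const_mul,
      Measure.integral_comp_div (fun u : ℝ => (1 + u ^ 2)⁻¹) δ, integral_univ_inv_one_add_sq,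
      abs_of_pos hδ, smul_eq_mul]
    field_simp
  linarith

lemma aux_prod (P : ℕ) (β δ M : ℝ) (hδ : 0 < δ) (hM : 0 ≤ M) (u g : ℝ → ℂ)
    (hu : ∀ z, 0 ≤ z → ‖u z‖ ≤ M) :
    blNorm P β δ 1 (fun z => u z * g z) ≤ ENNReal.ofReal M * blNorm P β δ 1 g := by
  refine iSup_le fun z => ?_
  have hw := aux_wt_pos P δ z.1 hδ z.2
  calc ENNReal.ofReal ((wt P 1 δ z.1)⁻¹ * Real.exp (β * z.1) * ‖u z.1 * g z.1‖)
      ≤ ENNReal.ofReal (M * ((wt P 1 δ z.1)⁻¹ * Real.exp (β * z.1) * ‖g z.1‖)) := by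
        apply ENNReal.ofReal_le_ofReal
        rw [norm_mul]
        calc _ = ‖u z.1‖ * ((wt P 1 δ z.1)⁻¹ * Real.exp (β * z.1) * ‖g z.1‖) := by ring
          _ ≤ _ := by
            gcongr
            exact hu _ z.2
    _ = ENNReal.ofReal M * ENNReal.ofReal ((wt P 1 δ z.1)⁻¹ * Real.exp (β * z.1) * ‖g z.1‖) :=
        ENNReal.ofReal_mul hM
    _ ≤ _ := by
        gcongr
        exact le_iSup (fun z : Set.Ici (0:ℝ) =>
          ENNReal.ofReal ((wt P 1 δ z.1)⁻¹ * Real.exp (β * z.1) * ‖g z.1‖)) z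

lemma aux_ker_le (a x z : ℝ) (ha : 0 ≤ a) (hx : 0 ≤ x) (hz : 0 ≤ z) :
    |Real.exp (-(a * |x - z|)) - Real.exp (-(a * (x + z)))| ≤ 1 := by
  have h1 : Real.exp (-(a * |x - z|)) ≤ 1 :=
    Real.exp_le_one_iff.2 (by have := mul_nonneg ha (abs_nonneg (x - z)); linarith)
  have h2 : Real.exp (-(a * (x + z))) ≤ 1 := Real.exp_le_one_iff.2 (by
    have := mul_nonneg ha (add_nonneg hx hz); linarith)
  have h3 := Real.exp_pos (-(a * |x - z|))
  have h4 := Real.exp_pos (-(a * (x + z)))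
  rw [abs_le]; constructor <;> linarith

lemma aux_ker_lip (a x z w : ℝ) (ha : 0 ≤ a) (hx : 0 ≤ x) (hz : 0 ≤ z) (hw : 0 ≤ w) :
    |(Real.exp (-(a * |x - z|)) - Real.exp (-(a * (x + z)))) -
      (Real.exp (-(a * |x - w|)) - Real.exp (-(a * (x + w))))| ≤ 2 * a * |z - w| := by
  have h1 := aux_exp_lip (a * |x - z|) (a * |x - w|) (by positivity) (by positivity)
  have h2 := aux_exp_lip (a * (x + z)) (a * (x + w)) (by positivity) (by positivity)
  have h3 : abs (a * |x - z| - a * |x - w|) ≤ a * |z - w| := by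
    rw [← mul_sub, abs_mul, abs_of_nonneg ha]
    refine mul_le_mul_of_nonneg_left ?_ ha
    have h5 := abs_abs_sub_abs_le (x - z) (x - w)
    have h6 : x - z - (x - w) = -(z - w) := by ring
    rwa [h6, abs_neg] at h5
  have h4 : |a * (x + z) - a * (x + w)| = a * |z - w| := by
    rw [← mul_sub, abs_mul, abs_of_nonneg ha]; congr 2; ring
  calc _ = |(Real.exp (-(a * |x - z|)) - Real.exp (-(a * |x - w|))) -
        (Real.exp (-(a * (x + z))) - Real.exp (-(a * (x + w))))| := by congr 1; ring
    _ ≤ _ := abs_sub _ _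
    _ ≤ _ := by linarith

lemma aux_ker_int (a z : ℝ) (ha : 0 ≤ a) (hz : 0 ≤ z) (f : ℝ → ℂ)
    (hf : IntegrableOn f (Ici 0)) :
    IntegrableOn (fun x : ℝ => ((Real.exp (-(a * |x - z|)) - Real.exp (-(a * (x + z))) : ℝ) : ℂ)
      * f x) (Ici 0) := by
  refine Integrable.bdd_mul (c := 1) hf ?_ ?_
  · exact (by fun_prop : Continuous (fun x : ℝ =>
      ((Real.exp (-(a * |x - z|)) - Real.exp (-(a * (x + z))) : ℝ) : ℂ))).aestronglyMeasurable
  · filter_upwards [ae_restrict_mem measurableSet_Ici] with x hx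
    rw [Complex.norm_real]
    exact aux_ker_le a x z ha hx hz

lemma aux_pre (a : ℝ) (ha : 0 < a) : ‖(-(1 / (2 * (a:ℂ))))‖ = 1 / (2 * a) := by
  rw [norm_neg, norm_div, norm_mul, Complex.norm_real]
  simp [abs_of_pos ha]

lemma aux_green_le (a z : ℝ) (ha : 1 ≤ a) (hz : 0 ≤ z) (f : ℝ → ℂ)
    (hf : IntegrableOn f (Ici 0)) :
    ‖greenSol a f z‖ ≤ ∫ x in Ici (0:ℝ), ‖f x‖ := by
  have ha0 : 0 < a := by linarith
  unfold greenSol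
  rw [norm_mul, aux_pre a ha0]
  have hI : ‖∫ x in Ici (0:ℝ), ((Real.exp (-(a * |x - z|)) - Real.exp (-(a * (x + z))) : ℝ) : ℂ)
      * f x‖ ≤ ∫ x in Ici (0:ℝ), ‖f x‖ := by
    refine norm_integral_le_of_norm_le hf.norm ?_
    filter_upwards [ae_restrict_mem measurableSet_Ici] with x hx
    rw [norm_mul, Complex.norm_real]
    exact mul_le_of_le_one_left (norm_nonneg _) (aux_ker_le a x z ha0.le hx hz)
  have h1 : 1 / (2 * a) ≤ 1 := by
    rw [div_le_one (by positivity)]; linarith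
  calc _ ≤ 1 * _ := mul_le_mul_of_nonneg_right h1 (norm_nonneg _)
    _ ≤ _ := by rw [one_mul]; exact hI

lemma aux_green_lip (a z w : ℝ) (ha : 1 ≤ a) (hz : 0 ≤ z) (hw : 0 ≤ w) (f : ℝ → ℂ)
    (hf : IntegrableOn f (Ici 0)) :
    ‖greenSol a f z - greenSol a f w‖ ≤ (∫ x in Ici (0:ℝ), ‖f x‖) * |z - w| := by
  have ha0 : 0 < a := by linarith
  unfold greenSol
  rw [← mul_sub, norm_mul, aux_pre a ha0,
    ← integral_sub (aux_ker_int a z ha0.le hz f hf) (aux_ker_int a w ha0.le hw f hf)]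
  have hI : ‖∫ x in Ici (0:ℝ), (((Real.exp (-(a * |x - z|)) - Real.exp (-(a * (x + z))) : ℝ) : ℂ)
      * f x - ((Real.exp (-(a * |x - w|)) - Real.exp (-(a * (x + w))) : ℝ) : ℂ) * f x)‖
      ≤ ∫ x in Ici (0:ℝ), 2 * a * |z - w| * ‖f x‖ := by
    refine norm_integral_le_of_norm_le (hf.norm.const_mul _) ?_
    filter_upwards [ae_restrict_mem measurableSet_Ici] with x hx
    rw [← sub_mul, norm_mul, ← Complex.ofReal_sub, Complex.norm_real]
    exact mul_le_mul_of_nonneg_right (aux_ker_lip a x z w ha0.le hx hz hw) (norm_nonneg _)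
  rw [integral_const_mul] at hI
  calc _ ≤ 1 / (2 * a) * _ := mul_le_mul_of_nonneg_left hI (by positivity)
    _ = _ := by field_simp

/-- product estimates for the stream function and its derivative against
boundary-layer vorticities: `‖φ'g‖_{β,δ,1} ≤ C‖f‖_{β,δ,1}‖g‖_{β,δ,1}` and
`‖φh‖_{β,δ,1} ≤ C‖f‖_{β,δ,1}‖h‖_{β,δ,1}`, with `C = C(β,P)`. -/
theorem stream_function_product_estimates (P : ℕ) (hP : 2 ≤ P)
    (β : ℝ) (hβ0 : 0 < β) (hβ : β < 1/2) :
    ∃ C : ℝ, 0 < C ∧ ∀ α : ℝ, 1 ≤ |α| → ∀ δ ∈ Set.Ioc (0:ℝ) 1, ∀ f : ℝ → ℂ,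
      ContinuousOn f (Set.Ici 0) → blNorm P β δ 1 f < ⊤ →
      ∀ g h : ℝ → ℂ,
        blNorm P β δ 1
            (fun z => derivWithin (greenSol |α| f) (Set.Ici 0) z * g z) ≤
          ENNReal.ofReal C * blNorm P β δ 1 f * blNorm P β δ 1 g ∧
        blNorm P β δ 1 (fun z => greenSol |α| f z * h z) ≤
          ENNReal.ofReal C * blNorm P β δ 1 f * blNorm P β δ 1 h := by
  refine ⟨1 / β + 2 * Real.pi, by positivity, ?_⟩
  intro α hα δ hδ f hfc hf g h
  have hδ0 : 0 < δ := hδ.1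
  obtain ⟨mi, mb⟩ := aux_majorant β δ hβ0 hδ0
  set F := (blNorm P β δ 1 f).toReal with hF
  have hF0 : 0 ≤ F := ENNReal.toReal_nonneg
  have hle : ∀ᵐ x ∂(volume.restrict (Ici (0:ℝ))), ‖f x‖ ≤
      F * (Real.exp (-β * x) + 2 * (δ⁻¹ * (1 + (x / δ) ^ 2)⁻¹)) := by
    filter_upwards [ae_restrict_mem measurableSet_Ici] with x hx
    exact aux_norm_le P hP β δ hβ0 hδ0 f hf x hx
  have hfi : IntegrableOn f (Ici 0) :=
    Integrable.mono' (mi.const_mul F) (hfc.aestronglyMeasurable measurableSet_Ici) hle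
  have hM : ∫ x in Ici (0:ℝ), ‖f x‖ ≤ (1 / β + 2 * Real.pi) * F := by
    calc _ ≤ ∫ x in Ici (0:ℝ), F * (Real.exp (-β * x) + 2 * (δ⁻¹ * (1 + (x / δ) ^ 2)⁻¹)) :=
          integral_mono_ae hfi.norm (mi.const_mul F) hle
      _ ≤ _ := by
          rw [integral_const_mul, mul_comm]
          gcongr
  have hC0 : 0 ≤ 1 / β + 2 * Real.pi := by positivity
  have hM0 : 0 ≤ (1 / β + 2 * Real.pi) * F := by positivity
  have hrw : ENNReal.ofReal (1 / β + 2 * Real.pi) * blNorm P β δ 1 f =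
      ENNReal.ofReal ((1 / β + 2 * Real.pi) * F) := by
    rw [ENNReal.ofReal_mul hC0, hF, ENNReal.ofReal_toReal hf.ne]
  rw [hrw]
  refine ⟨aux_prod P β δ _ hδ0 hM0 _ g ?_, aux_prod P β δ _ hδ0 hM0 _ h ?_⟩
  · intro z hz
    by_cases hd : DifferentiableWithinAt ℝ (greenSol |α| f) (Ici 0) z
    · have h1 := hd.hasDerivWithinAt.mono (s := Ioi z) (t := Ici 0)
        (fun x hx => hz.trans (le_of_lt hx))
      rw [hasDerivWithinAt_iff_tendsto_slope' (by simp)] at h1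
      refine le_of_tendsto h1.norm ?_
      filter_upwards [self_mem_nhdsWithin] with x hx
      have hx' : 0 < x - z := sub_pos.2 hx
      have h2 := aux_green_lip |α| x z hα (hz.trans (le_of_lt hx)) hz f hfi
      rw [slope_def_module, norm_smul, norm_inv, Real.norm_eq_abs]
      rw [abs_of_pos hx'] at h2 ⊢
      rw [inv_mul_le_iff₀ hx', mul_comm]
      exact h2.trans (by gcongr)
    · rw [derivWithin_zero_of_not_differentiableWithinAt hd, norm_zero]
      exact hM0
  · intro z hz
    exact (aux_green_le |α| z hα hz f hfi).trans hM
end
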